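/- (Remainder high-frequency estimate.) Let s, s₁, s₂ ∈ ℝ with s + d/2 = s₁ + s₂, 1 ≤ r ≤ ∞, 0 < ζ < ∞, and suppose s > −d/2. Then for all f ∈ B^{s₁}_{2,1}(𝕋_b^d) and g ∈ B^{s₂}_{2,r}(𝕋_b^d), the Bony remainder satisfies ‖R(f,g)‖^{h;ζ}_{B^s_{2,r}} ≤ C ‖f‖^{h;ζ/64}_{B^{s₁}_{2,1}} ‖g‖^{h;ζ/16}_{B^{s₂}_{2,r}}, with C independent of f, g, ζ. -/

import Mathlib

open MeasureTheory Filter Set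
open scoped ENNReal Topology

noncomputable section

namespace LowMach

attribute [local instance 10] Classical.propDecidable

/-- Frequency lattice of the torus `𝕋_b^d` (indices of Fourier modes). -/
abbrev Lat (d : ℕ) := Fin d → ℤ
/-- A scalar periodic distribution, represented by its Fourier coefficients. -/
abbrev SF (d : ℕ) := Lat d → ℂ
/-- A vector-field periodic distribution, represented by its Fourier coefficients. -/
abbrev VF (d : ℕ) := Lat d → Fin d → ℂ
/-- A `(d+1)`-component field `(a, u)`. -/
abbrev PairF (d : ℕ) := SF d × VF d

variable {d : ℕ} {E : Type*}

/-- `|𝕋_b^d| = ∏ 2π b_h`. -/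
def vol (b : Fin d → ℝ) : ℝ := ∏ h, (2 * Real.pi * b h)

/-- the real frequency `k_i/b_i` attached to the lattice point `k`. -/
def freq (b : Fin d → ℝ) (k : Lat d) (i : Fin d) : ℝ := (k i : ℝ) / b i

/-- `|k|`, the euclidean norm of the frequency. -/
def freqNorm (b : Fin d → ℝ) (k : Lat d) : ℝ := Real.sqrt (∑ i, (freq b k i) ^ 2)

/-- generalized sign: `1` iff the first nonzero component of `k` is positive. -/
def sg (k : Lat d) : ℝ := if ∃ i, 0 < k i ∧ ∀ j, j < i → k j = 0 then 1 else -1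

/-- `ℓ^r` norm (`r ∈ [1,∞]`) of an `ℝ≥0∞`-valued family. -/
def lr {α : Type*} (r : ℝ≥0∞) (f : α → ℝ≥0∞) : ℝ≥0∞ :=
  if r = ∞ then ⨆ a, f a else (∑' a, f a ^ r.toReal) ^ (1 / r.toReal)

/-- The time interval `(0,T)` (`T ∈ (0,∞]`). -/
def timeSet (T : ℝ≥0∞) : Set ℝ := {t : ℝ | 0 < t ∧ ENNReal.ofReal t < T}
/-- The time interval `[0,T]` (`= [0,∞)` if `T = ∞`). -/
def ctimeSet (T : ℝ≥0∞) : Set ℝ := {t : ℝ | 0 ≤ t ∧ ENNReal.ofReal t ≤ T}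

/-- `L^q(0,T)` norm of an `ℝ≥0∞`-valued function of time. -/
def timeLq (q T : ℝ≥0∞) (F : ℝ → ℝ≥0∞) : ℝ≥0∞ :=
  if q = ∞ then essSup F (volume.restrict (timeSet T))
  else (∫⁻ t in timeSet T, F t ^ q.toReal) ^ (1 / q.toReal)

/-- exponential on `ℝ≥0∞`. -/
def eexp (x : ℝ≥0∞) : ℝ≥0∞ := if x = ∞ then ∞ else ENNReal.ofReal (Real.exp x.toReal)

/-- The hypotheses on the fixed Littlewood–Paley bump function `φ`. -/
def GoodBump (φ : ℝ → ℝ) : Prop :=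
  ContDiff ℝ (⊤ : ℕ∞) φ ∧ (∀ ξ, 0 ≤ φ ξ) ∧
  (∀ ξ, φ ξ ≠ 0 → 3/4 ≤ |ξ| ∧ |ξ| ≤ 8/3) ∧
  (∀ ξ : ℝ, ξ ≠ 0 → HasSum (fun j : ℤ => φ ((2:ℝ) ^ (-j) * ξ)) 1)

section ENorms
variable [NormedAddCommGroup E] [NormedSpace ℝ E]

/-- the weight `φ(2^{-j}|k|)` of the `j`-th dyadic block. -/
def blockW (φ : ℝ → ℝ) (b : Fin d → ℝ) (j : ℤ) (k : Lat d) : ℝ :=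
  φ ((2:ℝ) ^ (-j) * freqNorm b k)

/-- the dyadic block `Δ_j` acting on Fourier coefficients. -/
def blockOp (φ : ℝ → ℝ) (b : Fin d → ℝ) (j : ℤ) (c : Lat d → E) : Lat d → E :=
  fun k => blockW φ b j k • c k

/-- the multiplier of the low-frequency cut-off `S_j` at `k ≠ 0`. -/
def SW (φ : ℝ → ℝ) (b : Fin d → ℝ) (j : ℤ) (k : Lat d) : ℝ :=
  ∑' j' : ℤ, if j' < j then blockW φ b j' k else 0

/-- the low-frequency cut-off `S_j g = ĝ₀/√|𝕋| + ∑_{j'≤j-1} Δ_{j'} g`. -/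
def SOp (φ : ℝ → ℝ) (b : Fin d → ℝ) (j : ℤ) (c : Lat d → E) : Lat d → E :=
  fun k => (if k = 0 then (1:ℝ) else SW φ b j k) • c k

/-- `L²(𝕋_b^d)` norm, via Parseval. -/
def eL2 (c : Lat d → E) : ℝ≥0∞ := (∑' k, (‖c k‖₊ : ℝ≥0∞) ^ 2) ^ (1/2 : ℝ)

/-- `‖ℱg‖_{ℓ¹}`. -/
def l1F (c : Lat d → E) : ℝ≥0∞ := ∑' k, (‖c k‖₊ : ℝ≥0∞)

/-- the mean-zero (underlined) part of a periodic distribution. -/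
def ul (c : Lat d → E) : Lat d → E := fun k => if k = 0 then 0 else c k

/-- `2^{js}‖Δ_j g‖_{L²}`. -/
def bw (φ : ℝ → ℝ) (b : Fin d → ℝ) (s : ℝ) (c : Lat d → E) (j : ℤ) : ℝ≥0∞ :=
  (2:ℝ≥0∞) ^ ((j : ℝ) * s) * eL2 (blockOp φ b j c)

/-- The Besov norm `‖·‖_{B^s_{2,r}}`. -/
def besovN (φ : ℝ → ℝ) (b : Fin d → ℝ) (s : ℝ) (r : ℝ≥0∞) (c : Lat d → E) : ℝ≥0∞ :=
  lr r (fun o : Option ℤ => o.elim (‖c 0‖₊ : ℝ≥0∞) (bw φ b s c))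

/-- High-frequency truncated Besov norm `‖·‖^{h;η}_{B^s_{2,r}}` (blocks `2^j ≥ η`). -/
def besovH (φ : ℝ → ℝ) (b : Fin d → ℝ) (η s : ℝ) (r : ℝ≥0∞) (c : Lat d → E) : ℝ≥0∞ :=
  lr r (fun j : ℤ => if η ≤ (2:ℝ) ^ j then bw φ b s c j else 0)

/-- Medium-frequency truncated Besov norm `‖·‖^{m;ζ,η}_{B^s_{2,r}}` (blocks `ζ ≤ 2^j < η`). -/
def besovM (φ : ℝ → ℝ) (b : Fin d → ℝ) (ζ η s : ℝ) (r : ℝ≥0∞) (c : Lat d → E) : ℝ≥0∞ :=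
  lr r (fun j : ℤ => if ζ ≤ (2:ℝ) ^ j ∧ (2:ℝ) ^ j < η then bw φ b s c j else 0)

/-- Low-frequency truncated Besov norm `‖·‖^{l;ζ}_{B^s_{2,r}}` (blocks `2^j < ζ`, plus zero mode). -/
def besovL (φ : ℝ → ℝ) (b : Fin d → ℝ) (ζ s : ℝ) (r : ℝ≥0∞) (c : Lat d → E) : ℝ≥0∞ :=
  lr r (fun o : Option ℤ =>
    o.elim (‖c 0‖₊ : ℝ≥0∞) (fun j => if (2:ℝ) ^ j < ζ then bw φ b s c j else 0))

/-- The Sobolev norm `‖·‖_{H^s}`. -/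
def hsN (b : Fin d → ℝ) (s : ℝ) (c : Lat d → E) : ℝ≥0∞ :=
  ((‖c 0‖₊ : ℝ≥0∞) ^ 2 +
    ∑' k, (if k = 0 then 0
      else ENNReal.ofReal (freqNorm b k ^ (2*s)) * (‖c k‖₊ : ℝ≥0∞) ^ 2)) ^ (1/2 : ℝ)

/-- The Chemin–Lerner norm `‖·‖_{L̃^q_T(B^s_{2,r})}`. -/
def CL (φ : ℝ → ℝ) (b : Fin d → ℝ) (q T : ℝ≥0∞) (s : ℝ) (r : ℝ≥0∞)
    (F : ℝ → Lat d → E) : ℝ≥0∞ :=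
  lr r (fun o : Option ℤ => o.elim (timeLq q T (fun t => (‖F t 0‖₊ : ℝ≥0∞)))
    (fun j => (2:ℝ≥0∞) ^ ((j:ℝ) * s) * timeLq q T (fun t => eL2 (blockOp φ b j (F t)))))

/-- `‖·‖^{h;η}_{L̃^q_T(B^s_{2,r})}`. -/
def CLH (φ : ℝ → ℝ) (b : Fin d → ℝ) (η : ℝ) (q T : ℝ≥0∞) (s : ℝ) (r : ℝ≥0∞)
    (F : ℝ → Lat d → E) : ℝ≥0∞ :=
  lr r (fun j : ℤ => if η ≤ (2:ℝ) ^ j then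
    (2:ℝ≥0∞) ^ ((j:ℝ) * s) * timeLq q T (fun t => eL2 (blockOp φ b j (F t))) else 0)

/-- `‖·‖^{m;ζ,η}_{L̃^q_T(B^s_{2,r})}`. -/
def CLM (φ : ℝ → ℝ) (b : Fin d → ℝ) (ζ η : ℝ) (q T : ℝ≥0∞) (s : ℝ) (r : ℝ≥0∞)
    (F : ℝ → Lat d → E) : ℝ≥0∞ :=
  lr r (fun j : ℤ => if ζ ≤ (2:ℝ) ^ j ∧ (2:ℝ) ^ j < η then
    (2:ℝ≥0∞) ^ ((j:ℝ) * s) * timeLq q T (fun t => eL2 (blockOp φ b j (F t))) else 0)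

/-- `‖·‖^{l;ζ}_{L̃^q_T(B^s_{2,r})}`. -/
def CLL (φ : ℝ → ℝ) (b : Fin d → ℝ) (ζ : ℝ) (q T : ℝ≥0∞) (s : ℝ) (r : ℝ≥0∞)
    (F : ℝ → Lat d → E) : ℝ≥0∞ :=
  lr r (fun o : Option ℤ => o.elim (timeLq q T (fun t => (‖F t 0‖₊ : ℝ≥0∞)))
    (fun j => if (2:ℝ) ^ j < ζ then
      (2:ℝ≥0∞) ^ ((j:ℝ) * s) * timeLq q T (fun t => eL2 (blockOp φ b j (F t))) else 0))

/-- `‖·‖_{L^q_T(B^s_{2,r})}`. -/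
def LqB (φ : ℝ → ℝ) (b : Fin d → ℝ) (q T : ℝ≥0∞) (s : ℝ) (r : ℝ≥0∞)
    (F : ℝ → Lat d → E) : ℝ≥0∞ :=
  timeLq q T (fun t => besovN φ b s r (F t))

/-- `‖·‖^{h;η}_{L^q_T(B^s_{2,r})}`. -/
def LqBH (φ : ℝ → ℝ) (b : Fin d → ℝ) (η : ℝ) (q T : ℝ≥0∞) (s : ℝ) (r : ℝ≥0∞)
    (F : ℝ → Lat d → E) : ℝ≥0∞ :=
  timeLq q T (fun t => besovH φ b η s r (F t))

/-- `‖·‖^{m;ζ,η}_{L^q_T(B^s_{2,r})}`. -/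
def LqBM (φ : ℝ → ℝ) (b : Fin d → ℝ) (ζ η : ℝ) (q T : ℝ≥0∞) (s : ℝ) (r : ℝ≥0∞)
    (F : ℝ → Lat d → E) : ℝ≥0∞ :=
  timeLq q T (fun t => besovM φ b ζ η s r (F t))

/-- `‖·‖^{l;ζ}_{L^q_T(B^s_{2,r})}`. -/
def LqBL (φ : ℝ → ℝ) (b : Fin d → ℝ) (ζ : ℝ) (q T : ℝ≥0∞) (s : ℝ) (r : ℝ≥0∞)
    (F : ℝ → Lat d → E) : ℝ≥0∞ :=
  timeLq q T (fun t => besovL φ b ζ s r (F t))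

/-- `‖·‖_{L^q_T(H^s)}`. -/
def LqHs (b : Fin d → ℝ) (q T : ℝ≥0∞) (s : ℝ) (F : ℝ → Lat d → E) : ℝ≥0∞ :=
  timeLq q T (fun t => hsN b s (F t))

/-- continuity in time, on `[0,T]`, with respect to a seminorm `N`. -/
def ContB (T : ℝ≥0∞) (N : (Lat d → E) → ℝ≥0∞) (F : ℝ → Lat d → E) : Prop :=
  ∀ t₀ ∈ ctimeSet T,
    Tendsto (fun t => N (fun k => F t k - F t₀ k)) (nhdsWithin t₀ (ctimeSet T)) (nhds 0)

/-- Fourier truncation: keep frequencies `|k| ≤ M`. -/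
def cutL (b : Fin d → ℝ) (M : ℝ) (c : Lat d → E) : Lat d → E :=
  fun k => if freqNorm b k ≤ M then c k else 0

/-- Fourier truncation: keep frequencies `|k| > M`. -/
def cutH (b : Fin d → ℝ) (M : ℝ) (c : Lat d → E) : Lat d → E :=
  fun k => if freqNorm b k ≤ M then 0 else c k

end ENorms

/-! ### Differential and product operators on Fourier coefficients -/

/-- product of two scalar periodic distributions (convolution of coefficients). -/
def mulC (b : Fin d → ℝ) (f g : SF d) : SF d :=
  fun m => ((Real.sqrt (vol b) : ℂ))⁻¹ * ∑' k, f k * g (m - k)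

/-- `∂_i`. -/
def pd (b : Fin d → ℝ) (i : Fin d) (f : SF d) : SF d :=
  fun k => Complex.I * (freq b k i : ℂ) * f k

/-- `div`. -/
def divC (b : Fin d → ℝ) (u : VF d) : SF d :=
  fun k => ∑ i, Complex.I * (freq b k i : ℂ) * u k i

/-- `∇`. -/
def gradC (b : Fin d → ℝ) (f : SF d) : VF d :=
  fun k i => Complex.I * (freq b k i : ℂ) * f k

/-- `Δ` on scalars. -/
def lapS (b : Fin d → ℝ) (f : SF d) : SF d :=
  fun k => ((-(freqNorm b k ^ 2) : ℝ) : ℂ) * f k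

/-- `Δ` on vector fields. -/
def lapV (b : Fin d → ℝ) (u : VF d) : VF d :=
  fun k i => ((-(freqNorm b k ^ 2) : ℝ) : ℂ) * u k i

/-- `ℚ = -∇(-Δ)⁻¹ div`, the projection onto gradient fields. -/
def QC (b : Fin d → ℝ) (u : VF d) : VF d := fun k i =>
  if k = 0 then 0 else
    (freq b k i : ℂ) * (∑ j, (freq b k j : ℂ) * u k j) / ((freqNorm b k ^ 2 : ℝ) : ℂ)

/-- `ℙ = I - ℚ`, the Leray projection. -/
def PC (b : Fin d → ℝ) (u : VF d) : VF d := fun k i => u k i - QC b u k i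

/-- product of a scalar field and a vector field. -/
def smulV (b : Fin d → ℝ) (f : SF d) (u : VF d) : VF d :=
  fun k i => mulC b f (fun k' => u k' i) k

/-- scalar product `u · v` of two vector fields. -/
def dotC (b : Fin d → ℝ) (u v : VF d) : SF d :=
  fun k => ∑ i, mulC b (fun k' => u k' i) (fun k' => v k' i) k

/-- `u · ∇v`. -/
def dotGrad (b : Fin d → ℝ) (u v : VF d) : VF d :=
  fun k i => ∑ j, mulC b (fun k' => u k' j) (pd b j (fun k' => v k' i)) k

/-- the Lamé operator `𝒜u = μΔu + (μ+λ)∇div u`. -/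
def AOp (b : Fin d → ℝ) (μ lam : ℝ) (u : VF d) : VF d := fun k i =>
  (μ : ℂ) * ((-(freqNorm b k ^ 2) : ℝ) : ℂ) * u k i
  + ((μ + lam : ℝ) : ℂ) * Complex.I * (freq b k i : ℂ) * divC b u k

/-! ### Spatial realization -/

/-- the function realizing a periodic distribution. -/
def toFun (b : Fin d → ℝ) (c : SF d) (x : EuclideanSpace ℝ (Fin d)) : ℂ :=
  ((Real.sqrt (vol b) : ℂ))⁻¹ *
    ∑' k, c k * Complex.exp (Complex.I * ((∑ i, freq b k i * x i : ℝ) : ℂ))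

/-- `L^∞` norm of a scalar periodic distribution. -/
def linf (b : Fin d → ℝ) (c : SF d) : ℝ≥0∞ :=
  ⨆ x : EuclideanSpace ℝ (Fin d), (‖toFun b c x‖₊ : ℝ≥0∞)

/-- `L^∞` norm of a vector field. -/
def linfV (b : Fin d → ℝ) (u : VF d) : ℝ≥0∞ := ⨆ i : Fin d, linf b (fun k => u k i)

/-- `L^∞` norm of a matrix field. -/
def linfM (b : Fin d → ℝ) (m : Lat d → Fin d → Fin d → ℂ) : ℝ≥0∞ :=
  ⨆ i : Fin d, ⨆ i' : Fin d, linf b (fun k => m k i i')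

/-- the gradient `∇u` of a vector field, a matrix field. -/
def gradVF (b : Fin d → ℝ) (u : VF d) : Lat d → Fin d → Fin d → ℂ :=
  fun k i i' => Complex.I * (freq b k i : ℂ) * u k i'

/-- `L^∞((0,T) × 𝕋_b^d)` norm of a time dependent scalar field. -/
def linfST (b : Fin d → ℝ) (T : ℝ≥0∞) (a : ℝ → SF d) : ℝ≥0∞ :=
  ⨆ t ∈ timeSet T, linf b (a t)

/-- a fundamental domain of the torus. -/
def box (b : Fin d → ℝ) : Set (EuclideanSpace ℝ (Fin d)) :=
  {x | ∀ i, x i ∈ Set.Ico (0:ℝ) (2 * Real.pi * b i)}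

/-- Fourier coefficients of the composition `G ∘ f` for a real-valued `f`. -/
def compC (b : Fin d → ℝ) (G : ℝ → ℝ) (c : SF d) : SF d := fun k =>
  ((Real.sqrt (vol b) : ℂ))⁻¹ *
    ∫ x in box b, (G ((toFun b c x).re) : ℂ) *
      Complex.exp (-Complex.I * ((∑ i, freq b k i * x i : ℝ) : ℂ))

/-! ### `L^p`-based Besov norms (general `p`) -/

/-- `L^p(𝕋_b^d)` norm of the `j`-th dyadic block. -/
def blockLp (φ : ℝ → ℝ) (b : Fin d → ℝ) (p : ℝ≥0∞) (j : ℤ) (c : SF d) : ℝ≥0∞ :=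
  eLpNorm (toFun b (blockOp φ b j c)) p (volume.restrict (box b))

/-- `L^p(𝕋_b^d)` norm of the zero mode `ĝ₀/√|𝕋_b^d|`. -/
def zmLp (b : Fin d → ℝ) (p : ℝ≥0∞) (c : SF d) : ℝ≥0∞ :=
  eLpNorm (fun _ : EuclideanSpace ℝ (Fin d) => ((Real.sqrt (vol b) : ℂ))⁻¹ * c 0) p
    (volume.restrict (box b))

/-- the Besov norm `‖·‖_{B^s_{p,r}}`. -/
def besovP (φ : ℝ → ℝ) (b : Fin d → ℝ) (p : ℝ≥0∞) (s : ℝ) (r : ℝ≥0∞) (c : SF d) : ℝ≥0∞ :=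
  lr r (fun o : Option ℤ =>
    o.elim (zmLp b p c) (fun j => (2:ℝ≥0∞) ^ ((j:ℝ) * s) * blockLp φ b p j c))

/-- the Chemin–Lerner norm `‖·‖_{L̃^q_T(B^s_{p,r})}`. -/
def CLP (φ : ℝ → ℝ) (b : Fin d → ℝ) (p q T : ℝ≥0∞) (s : ℝ) (r : ℝ≥0∞)
    (F : ℝ → SF d) : ℝ≥0∞ :=
  lr r (fun o : Option ℤ => o.elim (timeLq q T (fun t => zmLp b p (F t)))
    (fun j => (2:ℝ≥0∞) ^ ((j:ℝ) * s) * timeLq q T (fun t => blockLp φ b p j (F t))))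

/-- `‖·‖_{L^q_T(B^s_{p,r})}`. -/
def LqBP (φ : ℝ → ℝ) (b : Fin d → ℝ) (p q T : ℝ≥0∞) (s : ℝ) (r : ℝ≥0∞)
    (F : ℝ → SF d) : ℝ≥0∞ :=
  timeLq q T (fun t => besovP φ b p s r (F t))

/-! ### Bony decomposition -/

/-- the paraproduct `T_f g = ∑_j S_{j-2} f Δ_j g`. -/
def paraC (φ : ℝ → ℝ) (b : Fin d → ℝ) (f g : SF d) : SF d :=
  fun m => ∑' j : ℤ, mulC b (SOp φ b (j - 2) f) (blockOp φ b j g) m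

/-- the Bony remainder `R(f,g) = ∑_{|j-j'|≤2} Δ_j f Δ_{j'} g`. -/
def remC (φ : ℝ → ℝ) (b : Fin d → ℝ) (f g : SF d) : SF d :=
  fun m => ∑' p : ℤ × ℤ,
    if |p.1 - p.2| ≤ 2 then mulC b (blockOp φ b p.1 f) (blockOp φ b p.2 g) m else 0

/-! ### The acoustic wave group and the filtered/resonant bilinear operators -/

/-- the acoustic group `𝓛(τ) = e^{-τL}`, `L(a,u) = (div u, ∇a)`, computed explicitly
on Fourier modes. -/
def Lgrp (b : Fin d → ℝ) (τ : ℝ) (A : PairF d) : PairF d :=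
  (fun k =>
    if k = 0 then A.1 k else
      ((Real.cos (freqNorm b k * τ) : ℝ) : ℂ) * A.1 k -
        Complex.I * ((Real.sin (freqNorm b k * τ) : ℝ) : ℂ) *
          ((∑ i, (freq b k i : ℂ) * A.2 k i) / ((freqNorm b k : ℝ) : ℂ)),
   fun k i =>
    if k = 0 then A.2 k i else
      A.2 k i +
        (((Real.cos (freqNorm b k * τ) - 1 : ℝ) : ℂ) *
            ((∑ j, (freq b k j : ℂ) * A.2 k j) / ((freqNorm b k : ℝ) : ℂ)) -
          Complex.I * ((Real.sin (freqNorm b k * τ) : ℝ) : ℂ) * A.1 k) *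
          ((freq b k i / freqNorm b k : ℝ) : ℂ))

/-- membership in `(Ker L)^⊥ = {(a,∇g) : a ∈ L² mean-zero, g ∈ H¹}`. -/
def memKerLp (b : Fin d → ℝ) (A : PairF d) : Prop :=
  A.1 0 = 0 ∧ eL2 A.1 < ⊤ ∧
  ∃ g : SF d, (∀ k i, A.2 k i = Complex.I * (freq b k i : ℂ) * g k) ∧ hsN b 1 g < ⊤

/-- coordinates of a pair in the eigenbasis `Φ_k^α` of `L`. -/
def eig (b : Fin d → ℝ) (A : PairF d) (α : ℝ) (k : Lat d) : ℂ :=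
  (A.1 k - ((α * sg k : ℝ) : ℂ) *
    (∑ i, ((freq b k i / freqNorm b k : ℝ) : ℂ) * A.2 k i)) / ((Real.sqrt 2 : ℝ) : ℂ)

/-- reconstruction of a pair from coordinates in the eigenbasis `Φ_k^α`. -/
def fromEig (b : Fin d → ℝ) (Ec : ℝ → Lat d → ℂ) : PairF d :=
  (fun k => (Ec 1 k + Ec (-1) k) / ((Real.sqrt 2 : ℝ) : ℂ),
   fun k i => -(((sg k * (freq b k i / freqNorm b k) : ℝ)) : ℂ) *
      (Ec 1 k - Ec (-1) k) / ((Real.sqrt 2 : ℝ) : ℂ))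

/-- the filtered operator `𝒬₁^ε(u,B)` (with `τ = t/ε`). -/
def Q1e (b : Fin d → ℝ) (τ : ℝ) (u : VF d) (B : PairF d) : PairF d :=
  Lgrp b (-τ)
    ((fun m => divC b (smulV b (Lgrp b τ B).1 u) m),
     (fun m i => QC b (fun k i' =>
        dotGrad b u (Lgrp b τ B).2 k i' + dotGrad b (Lgrp b τ B).2 u k i') m i))

/-- the modified filtered operator `𝒬̌₁^ε(u,B)`. -/
def Qc1e (b : Fin d → ℝ) (τ : ℝ) (u : VF d) (B : PairF d) : PairF d :=
  Lgrp b (-τ)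
    ((fun m => divC b (smulV b (Lgrp b τ B).1 u) m),
     (fun m i => QC b (fun k i' => ∑ j, Complex.I * (freq b k j : ℂ) *
        mulC b (fun k' => u k' j) (fun k' => (Lgrp b τ B).2 k' i') k) m i))

/-- `𝒬̃₁^ε := 𝒬₁^ε - 𝒬̌₁^ε`. -/
def Qt1e (b : Fin d → ℝ) (τ : ℝ) (u : VF d) (B : PairF d) : PairF d :=
  (fun k => (Q1e b τ u B).1 k - (Qc1e b τ u B).1 k,
   fun k i => (Q1e b τ u B).2 k i - (Qc1e b τ u B).2 k i)

/-- the filtered operator `𝒬₂^ε(A,B)` (with `τ = t/ε`). -/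
def Q2e (b : Fin d → ℝ) (κ τ : ℝ) (A B : PairF d) : PairF d :=
  Lgrp b (-τ)
    ((fun m => (1/2 : ℂ) * divC b (fun k i =>
        mulC b (Lgrp b τ A).1 (fun k' => (Lgrp b τ B).2 k' i) k
        + mulC b (fun k' => (Lgrp b τ A).2 k' i) (Lgrp b τ B).1 k) m),
     (fun m i => (1/2 : ℂ) * (gradC b (dotC b (Lgrp b τ A).2 (Lgrp b τ B).2) m i
        + (κ : ℂ) * gradC b (mulC b (Lgrp b τ A).1 (Lgrp b τ B).1) m i)))

/-- the resonant limit `𝒬₁(v,A)` of `𝒬₁^ε`. -/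
def Q1res (b : Fin d → ℝ) (v : VF d) (A : PairF d) : PairF d :=
  fromEig b (fun γ m =>
    if m = 0 then 0 else
      (Complex.I / ((Real.sqrt (vol b) : ℝ) : ℂ)) *
        ∑' k : Lat d, ∑ α : Bool,
          (if k ≠ 0 ∧
              (if α then (1:ℝ) else -1) * sg k * freqNorm b k = γ * sg m * freqNorm b m then
            eig b A (if α then (1:ℝ) else -1) k *
              (∑ i, (freq b k i : ℂ) * v (m - k) i) *
              (((∑ i, freq b k i * freq b m i) / (freqNorm b k * freqNorm b m) : ℝ) : ℂ)
          else 0))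

/-- the resonant limit `𝒬₂(A,B)` of `𝒬₂^ε`. -/
def Q2res (b : Fin d → ℝ) (κ : ℝ) (A B : PairF d) : PairF d :=
  fromEig b (fun γ m =>
    if m = 0 then 0 else
      (-Complex.I) * (((Real.sqrt (2 * vol b))⁻¹ : ℝ) : ℂ) * (((κ + 3) / 4 : ℝ) : ℂ) *
        ((γ * sg m * freqNorm b m : ℝ) : ℂ) *
        ∑' k : Lat d,
          (if k ≠ 0 ∧ m - k ≠ 0 ∧
              sg k * freqNorm b k + sg (m - k) * freqNorm b (m - k)
                = γ * sg m * freqNorm b m then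
            eig b A γ k * eig b B γ (m - k)
          else 0))

/-- pair of coefficient functions, seen as a single `(d+1)`-component field. -/
def pairC (A : PairF d) : Lat d → ℂ × (Fin d → ℂ) := fun k => (A.1 k, A.2 k)

/-- time-dependent version of `pairC`. -/
def pairT (V : ℝ → PairF d) : ℝ → Lat d → ℂ × (Fin d → ℂ) := fun t => pairC (V t)

/-- the difference of two time-dependent pairs, as a `(d+1)`-component field. -/
def pdiffT (A B : ℝ → PairF d) : ℝ → Lat d → ℂ × (Fin d → ℂ) :=
  fun t k => ((A t).1 k - (B t).1 k, fun i => (A t).2 k i - (B t).2 k i)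

/-! ### The systems -/

/-- `F = -div(aᵉ uᵉ)`, the right-hand side of the mass equation. -/
def Ffield (b : Fin d → ℝ) (a : ℝ → SF d) (u : ℝ → VF d) : ℝ → SF d :=
  fun t k => -(divC b (smulV b (a t) (u t)) k)

/-- `G = -κ a∇a - K̃(εa) a∇a - I(εa)𝒜u + f`, the nonlinear right-hand side of the
momentum equation. -/
def Gfield (b : Fin d → ℝ) (μ lam κ : ℝ) (Kt : ℝ → ℝ) (ε : ℝ) (f : ℝ → VF d)
    (a : ℝ → SF d) (u : ℝ → VF d) : ℝ → VF d :=
  fun t k i =>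
    -(κ : ℂ) * smulV b (a t) (gradC b (a t)) k i
    - smulV b (compC b (fun y => Kt (ε * y)) (a t)) (smulV b (a t) (gradC b (a t))) k i
    - smulV b (compC b (fun y => (ε * y) / (1 + ε * y)) (a t)) (AOp b μ lam (u t)) k i
    + f t k i

/-- the compressible system (CNS_ε), written on Fourier coefficients:
`∂ₜa + ε⁻¹ div u = -div(au)`,
`∂ₜu + u·∇u - 𝒜u + ε⁻¹∇a = -κa∇a - K̃(εa)a∇a - I(εa)𝒜u + f`. -/
def IsCNS (b : Fin d → ℝ) (μ lam κ : ℝ) (Kt : ℝ → ℝ) (ε : ℝ) (T : ℝ≥0∞)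
    (f : ℝ → VF d) (a₀ : SF d) (u₀ : VF d) (a : ℝ → SF d) (u : ℝ → VF d) : Prop :=
  a 0 = a₀ ∧ u 0 = u₀ ∧
  (∀ t ∈ timeSet T, ∀ k, HasDerivAt (fun s => a s k)
      (-((ε⁻¹ : ℝ) : ℂ) * divC b (u t) k + Ffield b a u t k) t) ∧
  (∀ t ∈ timeSet T, ∀ k, ∀ i, HasDerivAt (fun s => u s k i)
      (-(dotGrad b (u t) (u t) k i) + AOp b μ lam (u t) k i
        - ((ε⁻¹ : ℝ) : ℂ) * gradC b (a t) k i + Gfield b μ lam κ Kt ε f a u t k i) t)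

/-- the incompressible Navier–Stokes system (INS):
`∂ₜv - μΔv + v·∇v + ∇π = h`, `div v = 0`. -/
def IsINS (b : Fin d → ℝ) (μ : ℝ) (T : ℝ≥0∞) (h : ℝ → VF d) (v₀ : VF d)
    (v : ℝ → VF d) : Prop :=
  v 0 = v₀ ∧ (∀ t ∈ timeSet T, ∀ k, divC b (v t) k = 0) ∧
  ∃ pr : ℝ → SF d, ∀ t ∈ timeSet T, ∀ k, ∀ i,
    HasDerivAt (fun s => v s k i)
      ((μ : ℂ) * lapV b (v t) k i - dotGrad b (v t) (v t) k i
        - gradC b (pr t) k i + h t k i) t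

/-- the limit system (LS): `∂ₜV + 𝒬₁(v,V) + 𝒬₂(V,V) - (ν/2)ΔV = 0`. -/
def IsLS (b : Fin d → ℝ) (ν κ : ℝ) (T : ℝ≥0∞) (v : ℝ → VF d) (V₀ : PairF d)
    (V : ℝ → PairF d) : Prop :=
  V 0 = V₀ ∧
  (∀ t ∈ timeSet T, ∀ k, HasDerivAt (fun s => (V s).1 k)
      (-(Q1res b (v t) (V t)).1 k - (Q2res b κ (V t) (V t)).1 k
        + ((ν/2 : ℝ) : ℂ) * lapS b (V t).1 k) t) ∧
  (∀ t ∈ timeSet T, ∀ k, ∀ i, HasDerivAt (fun s => (V s).2 k i)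
      (-(Q1res b (v t) (V t)).2 k i - (Q2res b κ (V t) (V t)).2 k i
        + ((ν/2 : ℝ) : ℂ) * lapV b (V t).2 k i) t)

/-! ### Solution classes -/

/-- `(a,u) ∈ C̃_T(B̲^{d/2}_{2,1}) × (C̃_T(B^{d/2-1}_{2,1}) ∩ L¹_T(B̲^{d/2+1}_{2,1}))^d`. -/
def CNSClass (φ : ℝ → ℝ) (b : Fin d → ℝ) (T : ℝ≥0∞)
    (a : ℝ → SF d) (u : ℝ → VF d) : Prop :=
  (∀ t ∈ ctimeSet T, a t 0 = 0) ∧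
  ContB T (besovN φ b ((d:ℝ)/2) 1) a ∧ CL φ b ∞ T ((d:ℝ)/2) 1 a < ⊤ ∧
  ContB T (besovN φ b ((d:ℝ)/2 - 1) 1) u ∧ CL φ b ∞ T ((d:ℝ)/2 - 1) 1 u < ⊤ ∧
  LqB φ b 1 T ((d:ℝ)/2 + 1) 1 (fun t => ul (u t)) < ⊤

/-- `v ∈ (C̃_T(B^{d/2-1}_{2,1}) ∩ L¹_T(B̲^{d/2+1}_{2,1}))^d`. -/
def INSClass (φ : ℝ → ℝ) (b : Fin d → ℝ) (T : ℝ≥0∞) (v : ℝ → VF d) : Prop :=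
  ContB T (besovN φ b ((d:ℝ)/2 - 1) 1) v ∧ CL φ b ∞ T ((d:ℝ)/2 - 1) 1 v < ⊤ ∧
  LqB φ b 1 T ((d:ℝ)/2 + 1) 1 (fun t => ul (v t)) < ⊤

/-- `V ∈ (Ker L)^⊥ ∩ (C̃_T(B^{d/2-1}_{2,1}) ∩ L¹_T(B^{d/2+1}_{2,1}))^{d+1}`. -/
def LSClass (φ : ℝ → ℝ) (b : Fin d → ℝ) (T : ℝ≥0∞) (V : ℝ → PairF d) : Prop :=
  (∀ t ∈ ctimeSet T, memKerLp b (V t)) ∧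
  ContB T (besovN φ b ((d:ℝ)/2 - 1) 1) (pairT V) ∧
  CL φ b ∞ T ((d:ℝ)/2 - 1) 1 (pairT V) < ⊤ ∧
  LqB φ b 1 T ((d:ℝ)/2 + 1) 1 (pairT V) < ⊤

/-! ### The quantities of the energy framework -/

/-- `t ↦ ℚuᵉ(t)`. -/
def nQu (b : Fin d → ℝ) (u : ℝ → VF d) : ℝ → VF d := fun t => QC b (u t)

/-- `t ↦ ℙuᵉ(t)`. -/
def nPu (b : Fin d → ℝ) (u : ℝ → VF d) : ℝ → VF d := fun t => PC b (u t)

/-- `t ↦ (aᵉ(t), ℚuᵉ(t))` as a `(d+1)`-component field. -/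
def pairAQ (b : Fin d → ℝ) (a : ℝ → SF d) (u : ℝ → VF d) :
    ℝ → Lat d → ℂ × (Fin d → ℂ) :=
  fun t k => (a t k, QC b (u t) k)

/-- the filtered unknown `Vᵉ(t) = 𝓛(-t/ε)(aᵉ(t), ℚuᵉ(t))`. -/
def VepsT (b : Fin d → ℝ) (ε : ℝ) (a : ℝ → SF d) (u : ℝ → VF d) : ℝ → PairF d :=
  fun t => Lgrp b (-(t/ε)) (a t, QC b (u t))

/-- `t ↦ ℙuᵉ(t) - v(t)`. -/
def wdiffT (b : Fin d → ℝ) (u : ℝ → VF d) (v : ℝ → VF d) : ℝ → VF d :=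
  fun t k i => PC b (u t) k i - v t k i

/-- the quantity `X^ε(T)`. -/
def XeQ (φ : ℝ → ℝ) (b : Fin d → ℝ) (η₀ ε : ℝ) (T : ℝ≥0∞)
    (a : ℝ → SF d) (u : ℝ → VF d) : ℝ≥0∞ :=
  ENNReal.ofReal ε * CLH φ b (η₀/ε) ∞ T ((d:ℝ)/2) 1 a
  + (ENNReal.ofReal ε)⁻¹ * LqBH φ b (η₀/ε) 1 T ((d:ℝ)/2) 1 a
  + (CLL φ b (η₀/ε) ∞ T ((d:ℝ)/2 - 1) 1 a + LqBL φ b (η₀/ε) 1 T ((d:ℝ)/2 + 1) 1 a)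
  + (CL φ b ∞ T ((d:ℝ)/2 - 1) 1 (nQu b u) + LqB φ b 1 T ((d:ℝ)/2 + 1) 1 (nQu b u))

/-- the quantity `P^ε(T)` (and `P` if applied to `v`). -/
def PeQ (φ : ℝ → ℝ) (b : Fin d → ℝ) (T : ℝ≥0∞) (w : ℝ → VF d) : ℝ≥0∞ :=
  CL φ b ∞ T ((d:ℝ)/2 - 1) 1 w + LqB φ b 1 T ((d:ℝ)/2 + 1) 1 (fun t => ul (w t))

/-- the quantity `[aᵉ,uᵉ]^{ζ,ε}_{h,m}(T)`. -/
def BhmQ (φ : ℝ → ℝ) (b : Fin d → ℝ) (η₀ ζ ε : ℝ) (T : ℝ≥0∞)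
    (a : ℝ → SF d) (u : ℝ → VF d) : ℝ≥0∞ :=
  ENNReal.ofReal ε * CL φ b ∞ T ((d:ℝ)/2) 1 a
  + ENNReal.ofReal ε * CLH φ b (η₀/ε) ∞ T ((d:ℝ)/2) 1 a
  + (ENNReal.ofReal ε)⁻¹ * LqBH φ b (η₀/ε) 1 T ((d:ℝ)/2) 1 a
  + (CLH φ b (η₀/ε) ∞ T ((d:ℝ)/2 - 1) 1 (nQu b u)
      + LqBH φ b (η₀/ε) 1 T ((d:ℝ)/2 + 1) 1 (nQu b u))
  + (CLM φ b ζ (η₀/ε) ∞ T ((d:ℝ)/2 - 1) 1 (pairAQ b a u)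
      + LqBM φ b ζ (η₀/ε) 1 T ((d:ℝ)/2 + 1) 1 (pairAQ b a u))
  + (CLH φ b ζ ∞ T ((d:ℝ)/2 - 1) 1 (nPu b u) + LqBH φ b ζ 1 T ((d:ℝ)/2 + 1) 1 (nPu b u))

/-- the quantity `[W,u]^{ζ,ε}_l(T)`. -/
def BlQ (φ : ℝ → ℝ) (b : Fin d → ℝ) {E : Type*} [NormedAddCommGroup E] [NormedSpace ℝ E]
    (ζ : ℝ) (T : ℝ≥0∞) (W : ℝ → Lat d → E) (w : ℝ → VF d) : ℝ≥0∞ :=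
  (CLL φ b ζ ∞ T ((d:ℝ)/2 - 1) 1 W + CLL φ b ζ 2 T ((d:ℝ)/2) 1 W)
  + (CLL φ b ζ ∞ T ((d:ℝ)/2 - 1) 1 w + LqBL φ b ζ 1 T ((d:ℝ)/2 + 1) 1 (fun t => ul (w t)))

/-- the quantity `Y^{ζ,ε}(T)`. -/
def YQ (φ : ℝ → ℝ) (b : Fin d → ℝ) (η₀ ζ ε : ℝ) (T : ℝ≥0∞)
    (a : ℝ → SF d) (u : ℝ → VF d) : ℝ≥0∞ :=
  BhmQ φ b η₀ ζ ε T a u + BlQ φ b ζ T (pairAQ b a u) (nPu b u)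

/-- the quantity `D^{ζ,ε}(T)`. -/
def DQ (φ : ℝ → ℝ) (b : Fin d → ℝ) (η₀ ζ ε : ℝ) (T : ℝ≥0∞)
    (a : ℝ → SF d) (u : ℝ → VF d) (V : ℝ → PairF d) (v : ℝ → VF d) : ℝ≥0∞ :=
  BhmQ φ b η₀ ζ ε T a u + BlQ φ b ζ T (pdiffT (VepsT b ε a u) V) (wdiffT b u v)

/-- the quantity `Z^ε_θ(T) = ‖Vᵉ-V‖_{L̃^∞_T(H^{d/2-1-θ}) ∩ L²_T(H^{d/2-θ})}`. -/
def ZQ (φ : ℝ → ℝ) (b : Fin d → ℝ) (θ : ℝ) (T : ℝ≥0∞) (ε : ℝ)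
    (a : ℝ → SF d) (u : ℝ → VF d) (V : ℝ → PairF d) : ℝ≥0∞ :=
  CL φ b ∞ T ((d:ℝ)/2 - 1 - θ) 2 (pdiffT (VepsT b ε a u) V)
  + timeLq 2 T (fun t => hsN b ((d:ℝ)/2 - θ) (pdiffT (VepsT b ε a u) V t))

/-- the quantity `W^ε_θ(T) = ‖ℙuᵉ-v‖_{L̃^∞_T(B^{d/2-1-θ}_{2,1}) ∩ L¹_T(B̲^{d/2+1-θ}_{2,1})}`. -/
def WQ (φ : ℝ → ℝ) (b : Fin d → ℝ) (θ : ℝ) (T : ℝ≥0∞)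
    (u : ℝ → VF d) (v : ℝ → VF d) : ℝ≥0∞ :=
  CL φ b ∞ T ((d:ℝ)/2 - 1 - θ) 1 (wdiffT b u v)
  + LqB φ b 1 T ((d:ℝ)/2 + 1 - θ) 1 (fun t => ul (wdiffT b u v t))

/-- the quantity `X = ‖V‖_{L̃^∞_{T₀}(B^{d/2-1}_{2,1}) ∩ L¹_{T₀}(B^{d/2+1}_{2,1})}`. -/
def XQ (φ : ℝ → ℝ) (b : Fin d → ℝ) (T₀ : ℝ≥0∞) (V : ℝ → PairF d) : ℝ≥0∞ :=
  CL φ b ∞ T₀ ((d:ℝ)/2 - 1) 1 (pairT V) + LqB φ b 1 T₀ ((d:ℝ)/2 + 1) 1 (pairT V)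

/-- the quantity `X₀`. -/
def X0Q (φ : ℝ → ℝ) (b : Fin d → ℝ) (η₀ ε : ℝ) (a₀ : SF d) (u₀ : VF d) : ℝ≥0∞ :=
  besovL φ b (η₀/ε) ((d:ℝ)/2 - 1) 1 a₀
  + ENNReal.ofReal ε * besovH φ b (η₀/ε) ((d:ℝ)/2) 1 a₀
  + besovN φ b ((d:ℝ)/2 - 1) 1 (QC b u₀)

/-- the quantity `P₀`. -/
def P0Q (φ : ℝ → ℝ) (b : Fin d → ℝ) (u₀ : VF d) : ℝ≥0∞ :=
  besovN φ b ((d:ℝ)/2 - 1) 1 (PC b u₀)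

/-- the quantity `ℚ_f`, where `fQ'` is the time derivative of `ℚf`. -/
def QfQ (φ : ℝ → ℝ) (b : Fin d → ℝ) (T₀ : ℝ≥0∞) (S : ℝ) (f fQ' : ℝ → VF d) : ℝ≥0∞ :=
  LqB φ b 1 T₀ ((d:ℝ)/2 - 1) 1 (fun t => QC b (f t))
  + LqHs b ∞ T₀ (-S) (fun t => QC b (f t))
  + LqHs b 1 T₀ (-S) fQ'

/-- the quantity `ℚ_f(0) = ‖ℚf(0)‖_{H^{-S}}`. -/
def Qf0Q (b : Fin d → ℝ) (S : ℝ) (f : ℝ → VF d) : ℝ≥0∞ := hsN b (-S) (QC b (f 0))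

/-- the quantity `ℙ_f`. -/
def PfQ (φ : ℝ → ℝ) (b : Fin d → ℝ) (T₀ : ℝ≥0∞) (f : ℝ → VF d) : ℝ≥0∞ :=
  LqB φ b 1 T₀ ((d:ℝ)/2 - 1) 1 (fun t => PC b (f t))

/-! ### Auxiliary lemmas -/

lemma lr_mono {α : Type*} (r : ℝ≥0∞) {f g : α → ℝ≥0∞} (h : ∀ a, f a ≤ g a) :
    lr r f ≤ lr r g := by
  unfold lr
  split_ifs
  · exact iSup_mono h
  · exact ENNReal.rpow_le_rpow (ENNReal.tsum_le_tsum fun a =>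
      ENNReal.rpow_le_rpow (h a) ENNReal.toReal_nonneg) (by positivity)

lemma lr_const_mul {α : Type*} (r : ℝ≥0∞) (hr : 1 ≤ r) (c : ℝ≥0∞) (f : α → ℝ≥0∞) :
    lr r (fun a => c * f a) = c * lr r f := by
  unfold lr
  split_ifs with h
  · rw [ENNReal.mul_iSup]
  · have hp : 1 ≤ r.toReal := by
      have := ENNReal.toReal_mono h hr
      simpa using this
    have hp0 : (0:ℝ) ≤ r.toReal := by linarith
    simp_rw [ENNReal.mul_rpow_of_nonneg _ _ hp0, ENNReal.tsum_mul_left]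
    rw [ENNReal.mul_rpow_of_nonneg _ _ (by positivity), ← ENNReal.rpow_mul,
      mul_one_div_cancel (by linarith), ENNReal.rpow_one]

lemma lr_one {α : Type*} (f : α → ℝ≥0∞) : lr 1 f = ∑' a, f a := by
  simp [lr]

lemma jensen_tsum {α : Type*} {p : ℝ} (hp : 1 ≤ p) (w f : α → ℝ≥0∞) :
    (∑' i, w i * f i) ^ p ≤ (∑' i, w i) ^ (p - 1) * ∑' i, w i * f i ^ p := by
  have hp0 : 0 < p := by linarith
  have h1 : ∑' i, w i * f i ≤ (∑' i, w i) ^ (1 - p⁻¹) * (∑' i, w i * f i ^ p) ^ p⁻¹ := by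
    rw [ENNReal.tsum_eq_iSup_sum]
    refine iSup_le fun s => ?_
    refine (ENNReal.inner_le_weight_mul_Lp_of_nonneg s hp w f).trans ?_
    have : 0 ≤ 1 - p⁻¹ := by
      have := inv_le_one_of_one_le₀ hp
      linarith
    gcongr
    · exact ENNReal.sum_le_tsum s
    · exact ENNReal.sum_le_tsum s
  refine (ENNReal.rpow_le_rpow h1 hp0.le).trans ?_
  rw [ENNReal.mul_rpow_of_nonneg _ _ hp0.le, ← ENNReal.rpow_mul, ← ENNReal.rpow_mul,
    inv_mul_cancel₀ hp0.ne', ENNReal.rpow_one]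
  have : (1 - p⁻¹) * p = p - 1 := by field_simp
  rw [this]

/-- discrete Young inequality `ℓ¹ * ℓ^r ⊂ ℓ^r`. -/
lemma young_lr (r : ℝ≥0∞) (hr : 1 ≤ r) (k G : ℤ → ℝ≥0∞) :
    lr r (fun q => ∑' j, k (q - j) * G j) ≤ (∑' n, k n) * lr r G := by
  have hk1 : ∀ q : ℤ, ∑' j, k (q - j) = ∑' n, k n := fun q =>
    (Equiv.subLeft q).tsum_eq k
  have hk2 : ∀ j : ℤ, ∑' q, k (q - j) = ∑' n, k n := fun j =>
    (Equiv.subRight j).tsum_eq k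
  unfold lr
  split_ifs with h
  · refine iSup_le fun q => ?_
    rw [← hk1 q, ← ENNReal.tsum_mul_right]
    exact ENNReal.tsum_le_tsum fun j => mul_le_mul_right (le_iSup G j) _
  · have hp : 1 ≤ r.toReal := by
      have := ENNReal.toReal_mono h hr
      simpa using this
    set p := r.toReal
    have hp0 : 0 < p := by linarith
    set K := ∑' n, k n
    have h1 : ∑' q, (∑' j, k (q - j) * G j) ^ p ≤ K ^ p * ∑' j, G j ^ p := by
      calc ∑' q, (∑' j, k (q - j) * G j) ^ p
          ≤ ∑' q, K ^ (p - 1) * ∑' j, k (q - j) * G j ^ p := by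
            refine ENNReal.tsum_le_tsum fun q => ?_
            rw [← hk1 q]
            exact jensen_tsum hp _ _
        _ = K ^ (p - 1) * (K * ∑' j, G j ^ p) := by
            rw [ENNReal.tsum_mul_left, ENNReal.tsum_comm]
            congr 1
            simp_rw [ENNReal.tsum_mul_right, hk2]
            rw [ENNReal.tsum_mul_left]
        _ = K ^ p * ∑' j, G j ^ p := by
            rw [← mul_assoc]
            congr 1
            conv_lhs => rw [← ENNReal.rpow_one K]
            rw [ENNReal.rpow_one, ← ENNReal.rpow_one K, ← ENNReal.rpow_mul,
              ← ENNReal.rpow_add_of_nonneg _ _ (by linarith) (by norm_num), ← ENNReal.rpow_mul]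
            congr 1
            ring
    refine (ENNReal.rpow_le_rpow h1 (by positivity)).trans ?_
    rw [ENNReal.mul_rpow_of_nonneg _ _ (by positivity), ← ENNReal.rpow_mul,
      mul_one_div_cancel hp0.ne', ENNReal.rpow_one]

/-- the kernel `2^{nσ}`, `n ≤ 4`. -/
def kerY (σ : ℝ) (n : ℤ) : ℝ≥0∞ := if n ≤ 4 then (2:ℝ≥0∞) ^ ((n:ℝ) * σ) else 0

lemma kerY_sum (σ : ℝ) (hσ : 0 < σ) : ∑' n, kerY σ n < ⊤ := by
  have hinj : Function.Injective (fun m : ℕ => (4:ℤ) - m) := by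
    intro a b h
    simpa using h
  have hsupp : Function.support (kerY σ) ⊆ Set.range (fun m : ℕ => (4:ℤ) - m) := by
    intro n hn
    have : n ≤ 4 := by
      by_contra h
      exact hn (by simp [kerY, h])
    exact ⟨(4 - n).toNat, by simp only; omega⟩
  rw [← hinj.tsum_eq hsupp]
  have : ∀ m : ℕ, kerY σ ((4:ℤ) - m) = (2:ℝ≥0∞) ^ (4 * σ) * ((2:ℝ≥0∞) ^ (-σ)) ^ m := by
    intro m
    have h4 : (4:ℤ) - m ≤ 4 := by omega
    rw [kerY, if_pos h4, ← ENNReal.rpow_natCast, ← ENNReal.rpow_mul,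
      ← ENNReal.rpow_add _ _ (by norm_num) (by norm_num)]
    congr 1
    push_cast
    ring
  simp_rw [this]
  rw [ENNReal.tsum_mul_left, ENNReal.tsum_geometric]
  refine ENNReal.mul_lt_top (ENNReal.rpow_lt_top_of_nonneg (by positivity) (by norm_num)) ?_
  rw [ENNReal.inv_lt_top, tsub_pos_iff_lt]
  exact ENNReal.rpow_lt_one_of_one_lt_of_neg (by norm_num) (by linarith)

lemma cauchy_tsum {α : Type*} (f g : α → ℝ≥0∞) :
    ∑' i, f i * g i ≤ (∑' i, f i ^ 2) ^ (1/2 : ℝ) * (∑' i, g i ^ 2) ^ (1/2 : ℝ) := by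
  rw [ENNReal.tsum_eq_iSup_sum]
  refine iSup_le fun s => ?_
  have h := ENNReal.inner_le_Lp_mul_Lq s f g (p := 2) (q := 2) Real.HolderConjugate.two_two
  refine h.trans ?_
  simp only [ENNReal.rpow_two]
  gcongr
  · exact ENNReal.sum_le_tsum s
  · exact ENNReal.sum_le_tsum s

lemma freqNorm_eq (b : Fin d → ℝ) (k : Lat d) :
    freqNorm b k = ‖(WithLp.toLp 2 (freq b k) : EuclideanSpace ℝ (Fin d))‖ := by
  rw [EuclideanSpace.norm_eq]
  simp [freqNorm]

lemma freqNorm_add_le (b : Fin d → ℝ) (k l : Lat d) :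
    freqNorm b (k + l) ≤ freqNorm b k + freqNorm b l := by
  simp only [freqNorm_eq]
  have : freq b (k + l) = freq b k + freq b l := by
    ext i
    simp [freq, add_div]
  rw [this, WithLp.toLp_add]
  exact norm_add_le _ _

lemma abs_freq_le (b : Fin d → ℝ) (k : Lat d) (i : Fin d) : |freq b k i| ≤ freqNorm b k := by
  rw [freqNorm]
  refine Real.abs_le_sqrt ?_
  exact Finset.single_le_sum (f := fun i => freq b k i ^ 2) (fun _ _ => sq_nonneg _)
    (Finset.mem_univ i)

lemma bump_le_one {φ : ℝ → ℝ} (hφ : GoodBump φ) (ξ : ℝ) : φ ξ ≤ 1 := by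
  obtain ⟨-, h0, hs, h1⟩ := hφ
  by_cases hξ : ξ = 0
  · by_contra h
    have := (hs ξ (by intro h'; rw [h'] at h; norm_num at h)).1
    rw [hξ] at this
    norm_num at this
  · have := le_hasSum (h1 ξ hξ) 0 (fun j _ => h0 _)
    simpa using this

lemma blockW_supp {φ : ℝ → ℝ} (hφ : GoodBump φ) (b : Fin d → ℝ) (j : ℤ) (k : Lat d)
    (h : blockW φ b j k ≠ 0) :
    3/4 * (2:ℝ) ^ j ≤ freqNorm b k ∧ freqNorm b k ≤ 8/3 * (2:ℝ) ^ j := by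
  have h2 : (0:ℝ) < 2 ^ j := by positivity
  have hn : 0 ≤ freqNorm b k := Real.sqrt_nonneg _
  have := hφ.2.2.1 _ h
  rw [abs_of_nonneg (by positivity), zpow_neg, inv_mul_eq_div] at this
  rw [le_div_iff₀ h2, div_le_iff₀ h2] at this
  exact this

/-- number of frequencies in a dyadic annulus. -/
lemma block_count {φ : ℝ → ℝ} (hφ : GoodBump φ) (b : Fin d → ℝ) (hb : ∀ i, 0 < b i) (q : ℤ) :
    ∃ S : Finset (Lat d), (∀ m, blockW φ b q m ≠ 0 → m ∈ S) ∧
      (S.card : ℝ) ≤ (8 * (∑ i, b i) * (2:ℝ) ^ q) ^ d := by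
  have h2 : (0:ℝ) < 2 ^ q := by positivity
  have hβ : 0 ≤ ∑ i, b i := Finset.sum_nonneg fun i _ => (hb i).le
  by_cases hne : ∃ m, blockW φ b q m ≠ 0
  · set X : ℝ := 8/3 * (2:ℝ) ^ q with hX
    have hX0 : 0 < X := by positivity
    have hcoord : ∀ m, blockW φ b q m ≠ 0 → ∀ i, |(m i : ℝ)| ≤ X * b i := by
      intro m hm i
      have h := (abs_freq_le b m i).trans (blockW_supp hφ b q m hm).2
      rw [freq, abs_div, abs_of_pos (hb i), div_le_iff₀ (hb i)] at h
      exact h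
    have h1 : 1 ≤ X * ∑ i, b i := by
      obtain ⟨m, hm⟩ := hne
      have hm0 : m ≠ 0 := by
        rintro rfl
        have := (blockW_supp hφ b q 0 hm).1
        simp only [freqNorm, freq] at this
        simp at this
        linarith
      obtain ⟨i, hi⟩ := Function.ne_iff.1 hm0
      have h3 : (1:ℝ) ≤ |(m i : ℝ)| := by
        have := Int.one_le_abs hi
        exact_mod_cast this
      have h4 : b i ≤ ∑ i, b i :=
        Finset.single_le_sum (f := b) (fun i _ => (hb i).le) (Finset.mem_univ i)
      exact h3.trans ((hcoord m hm i).trans (by gcongr))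
    refine ⟨Fintype.piFinset fun i => Finset.Icc (-⌊X * b i⌋) ⌊X * b i⌋, ?_, ?_⟩
    · intro m hm
      rw [Fintype.mem_piFinset]
      intro i
      have := abs_le.1 (hcoord m hm i)
      rw [Finset.mem_Icc]
      refine ⟨?_, Int.le_floor.2 this.2⟩
      rw [neg_le]
      refine Int.le_floor.2 ?_
      push_cast
      linarith [this.1]
    · rw [Fintype.card_piFinset]
      push_cast
      have : ∀ i ∈ (Finset.univ : Finset (Fin d)),
          ((Finset.Icc (-⌊X * b i⌋) ⌊X * b i⌋).card : ℝ) ≤ 8 * (∑ i, b i) * (2:ℝ) ^ q := by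
        intro i _
        have hf0 : 0 ≤ ⌊X * b i⌋ := Int.floor_nonneg.2 (mul_pos hX0 (hb i)).le
        have hf1 := Int.floor_le (X * b i)
        have h4 : b i ≤ ∑ i, b i :=
          Finset.single_le_sum (f := b) (fun i _ => (hb i).le) (Finset.mem_univ i)
        have h5 : X * b i ≤ X * ∑ i, b i := by gcongr
        have hc : ((Finset.Icc (-⌊X * b i⌋) ⌊X * b i⌋).card : ℤ) = 2 * ⌊X * b i⌋ + 1 := by
          rw [Int.card_Icc]
          omega
        have hc' : ((Finset.Icc (-⌊X * b i⌋) ⌊X * b i⌋).card : ℝ) = 2 * ⌊X * b i⌋ + 1 := by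
          exact_mod_cast hc
        rw [hc']
        have : 8 * (∑ i, b i) * (2:ℝ) ^ q = 3 * (X * ∑ i, b i) := by rw [hX]; ring
        rw [this]
        linarith
      refine (Finset.prod_le_prod (fun i _ => by positivity) this).trans ?_
      simp
  · push Not at hne
    refine ⟨∅, fun m hm => absurd (hne m) hm, ?_⟩
    simp only [Finset.card_empty, Nat.cast_zero]
    positivity

/-- Bernstein type inequality. -/
lemma eL2_block_le {φ : ℝ → ℝ} (hφ : GoodBump φ) (b : Fin d → ℝ) (hb : ∀ i, 0 < b i) (q : ℤ)
    (c : SF d) (A : ℝ≥0∞) (hA : ∀ m, blockW φ b q m ≠ 0 → ‖c m‖ₑ ≤ A) :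
    eL2 (blockOp φ b q c) ≤
      ENNReal.ofReal (8 * ∑ i, b i) ^ ((d:ℝ)/2) * (2:ℝ≥0∞) ^ ((q:ℝ) * ((d:ℝ)/2)) * A := by
  obtain ⟨S, hS, hcard⟩ := block_count hφ b hb q
  have hβ : 0 ≤ ∑ i, b i := Finset.sum_nonneg fun i _ => (hb i).le
  have h1 : ∑' k, (‖blockOp φ b q c k‖₊ : ℝ≥0∞) ^ 2 ≤ S.card * A ^ 2 := by
    rw [tsum_eq_sum (s := S)]
    · rw [← nsmul_eq_mul]
      refine Finset.sum_le_card_nsmul _ _ _ fun m _ => ?_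
      gcongr
      by_cases hm : blockW φ b q m = 0
      · simp [blockOp, hm]
      · change ‖blockOp φ b q c m‖ₑ ≤ A
        rw [blockOp, enorm_smul]
        refine le_trans ?_ (hA m hm)
        have : ‖blockW φ b q m‖ₑ ≤ 1 := by
          rw [blockW, Real.enorm_of_nonneg (hφ.2.1 _), ENNReal.ofReal_le_one]
          exact bump_le_one hφ _
        calc _ ≤ 1 * ‖c m‖ₑ := by gcongr
          _ = _ := one_mul _
    · intro m hm
      have : blockW φ b q m = 0 := by
        by_contra h
        exact hm (hS m h)
      simp [blockOp, this]
  have h2 : (S.card : ℝ≥0∞) ≤ (ENNReal.ofReal (8 * ∑ i, b i) * (2:ℝ≥0∞) ^ (q:ℝ)) ^ (d:ℝ) := by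
    have e : (2:ℝ≥0∞) ^ (q:ℝ) = ENNReal.ofReal ((2:ℝ) ^ q) := by
      rw [← Real.rpow_intCast, ← ENNReal.ofReal_rpow_of_pos (by norm_num)]
      simp
    rw [e, ← ENNReal.ofReal_mul (by positivity), ENNReal.rpow_natCast,
      ← ENNReal.ofReal_pow (by positivity), ← ENNReal.ofReal_natCast]
    exact ENNReal.ofReal_le_ofReal hcard
  unfold eL2
  calc (∑' k, (‖blockOp φ b q c k‖₊ : ℝ≥0∞) ^ 2) ^ (1/2 : ℝ)
      ≤ ((ENNReal.ofReal (8 * ∑ i, b i) * (2:ℝ≥0∞) ^ (q:ℝ)) ^ (d:ℝ) * A ^ 2) ^ (1/2 : ℝ) := by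
        gcongr
        exact h1.trans (by gcongr)
    _ = _ := by
        rw [ENNReal.mul_rpow_of_nonneg _ _ (by norm_num), ← ENNReal.rpow_mul,
          ENNReal.mul_rpow_of_nonneg _ _ (by positivity), ← ENNReal.rpow_mul,
          ← ENNReal.rpow_natCast A 2, ← ENNReal.rpow_mul]
        norm_num
        congr 3 <;> ring

/-- the constant `|𝕋|^{-1/2}`. -/
def cV (b : Fin d → ℝ) : ℝ≥0∞ := ‖((Real.sqrt (vol b) : ℂ))⁻¹‖ₑ

lemma mulC_le (b : Fin d → ℝ) (f g : SF d) (m : Lat d) :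
    ‖mulC b f g m‖ₑ ≤ cV b * (eL2 f * eL2 g) := by
  rw [mulC, enorm_mul, cV]
  gcongr
  refine enorm_tsum_le_tsum_enorm.trans ?_
  simp_rw [enorm_mul]
  refine (cauchy_tsum _ _).trans ?_
  unfold eL2
  rw [← (Equiv.subLeft m).tsum_eq (fun k => (‖g k‖₊ : ℝ≥0∞) ^ 2)]
  rfl

/-- frequency localization of products of dyadic blocks. -/
lemma mulC_block_eq_zero {φ : ℝ → ℝ} (hφ : GoodBump φ) (b : Fin d → ℝ) (f g : SF d)
    (q i j : ℤ) (hij : |i - j| ≤ 2) (hq : ¬ q - j ≤ 4) (m : Lat d) (hm : blockW φ b q m ≠ 0) :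
    mulC b (blockOp φ b i f) (blockOp φ b j g) m = 0 := by
  have : ∀ k, blockOp φ b i f k * blockOp φ b j g (m - k) = 0 := by
    intro k
    by_contra h
    have h1 : blockW φ b i k ≠ 0 := by
      intro h0; apply h; simp [blockOp, h0]
    have h2 : blockW φ b j (m - k) ≠ 0 := by
      intro h0; apply h; simp [blockOp, h0]
    have h3 := (blockW_supp hφ b i k h1).2
    have h4 := (blockW_supp hφ b j (m - k) h2).2
    have h5 := (blockW_supp hφ b q m hm).1
    have h6 := freqNorm_add_le b k (m - k)
    rw [add_sub_cancel] at h6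
    have h7 : (2:ℝ) ^ i ≤ 4 * 2 ^ j := by
      have : (2:ℝ) ^ i ≤ 2 ^ (2 + j) := zpow_le_zpow_right₀ (by norm_num) (by
        have := (abs_le.1 hij).2
        omega)
      rw [zpow_add₀ (by norm_num)] at this
      norm_num at this
      exact this
    have h8 : 32 * (2:ℝ) ^ j ≤ 2 ^ q := by
      have : (2:ℝ) ^ (5 + j) ≤ 2 ^ q := zpow_le_zpow_right₀ (by norm_num) (by omega)
      rw [zpow_add₀ (by norm_num)] at this
      norm_num at this
      exact this
    have h9 : (0:ℝ) < 2 ^ j := by positivity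
    linarith
  rw [mulC]
  simp [this]

lemma remC_le {φ : ℝ → ℝ} (hφ : GoodBump φ) (b : Fin d → ℝ) (f g : SF d)
    (q : ℤ) (m : Lat d) (hm : blockW φ b q m ≠ 0) :
    ‖remC φ b f g m‖ₑ ≤ ∑' p : ℤ × ℤ, if |p.1 - p.2| ≤ 2 ∧ q - p.2 ≤ 4 then
      cV b * (eL2 (blockOp φ b p.1 f) * eL2 (blockOp φ b p.2 g)) else 0 := by
  refine enorm_tsum_le_tsum_enorm.trans (ENNReal.tsum_le_tsum fun p => ?_)
  by_cases h1 : |p.1 - p.2| ≤ 2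
  · by_cases h2 : q - p.2 ≤ 4
    · simp only [h1, h2, and_self, if_true]
      exact mulC_le b _ _ m
    · rw [if_pos h1, mulC_block_eq_zero hφ b f g q p.1 p.2 h1 h2 m hm]
      simp
  · simp [h1]

lemma bw_rem_le {φ : ℝ → ℝ} (hφ : GoodBump φ) (b : Fin d → ℝ) (hb : ∀ i, 0 < b i)
    (s s₁ s₂ : ℝ) (hsum : s + (d:ℝ)/2 = s₁ + s₂) (ζ : ℝ) (f g : SF d)
    (q : ℤ) (hq : ζ ≤ (2:ℝ) ^ q) :
    bw φ b s (remC φ b f g) q ≤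
      ENNReal.ofReal (8 * ∑ i, b i) ^ ((d:ℝ)/2) * cV b * (2:ℝ≥0∞) ^ (2 * |s₁|) *
        (besovH φ b (ζ/64) s₁ 1 f * ∑' j : ℤ, kerY (s₁ + s₂) (q - j) *
          (if ζ/16 ≤ (2:ℝ) ^ j then bw φ b s₂ g j else 0)) := by
  have h20 : (2:ℝ≥0∞) ≠ 0 := by norm_num
  have h2t : (2:ℝ≥0∞) ≠ ⊤ := by norm_num
  have h := eL2_block_le hφ b hb q (remC φ b f g) _ (remC_le hφ b f g q)
  set Sg := ∑' p : ℤ × ℤ, if |p.1 - p.2| ≤ 2 ∧ q - p.2 ≤ 4 then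
        cV b * (eL2 (blockOp φ b p.1 f) * eL2 (blockOp φ b p.2 g)) else 0 with hSg
  have hmain : (2:ℝ≥0∞) ^ ((q:ℝ) * (s₁ + s₂)) *
      Sg ≤
      cV b * (2:ℝ≥0∞) ^ (2 * |s₁|) *
        (besovH φ b (ζ/64) s₁ 1 f * ∑' j : ℤ, kerY (s₁ + s₂) (q - j) *
          (if ζ/16 ≤ (2:ℝ) ^ j then bw φ b s₂ g j else 0)) := by
    rw [hSg, besovH, lr_one, ← ENNReal.tsum_mul_left]
    rw [← ENNReal.tsum_mul_right]
    simp_rw [← ENNReal.tsum_mul_left]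
    rw [← ENNReal.tsum_prod (f := fun i j => cV b * (2:ℝ≥0∞) ^ (2 * |s₁|) *
      ((if ζ/64 ≤ (2:ℝ) ^ i then bw φ b s₁ f i else 0) * (kerY (s₁ + s₂) (q - j) *
          (if ζ/16 ≤ (2:ℝ) ^ j then bw φ b s₂ g j else 0))))]
    refine ENNReal.tsum_le_tsum ?_
    rintro ⟨i, j⟩
    by_cases hc : |i - j| ≤ 2 ∧ q - j ≤ 4
    · have hj : ζ/16 ≤ (2:ℝ) ^ j := by
        have : (2:ℝ) ^ q ≤ 2 ^ (4 + j) := zpow_le_zpow_right₀ (by norm_num) (by omega)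
        rw [zpow_add₀ (by norm_num)] at this
        norm_num at this
        linarith
      have hi : ζ/64 ≤ (2:ℝ) ^ i := by
        have : (2:ℝ) ^ q ≤ 2 ^ (6 + i) := zpow_le_zpow_right₀ (by norm_num) (by
          have := (abs_le.1 hc.1).1
          omega)
        rw [zpow_add₀ (by norm_num)] at this
        norm_num at this
        linarith
      simp only [hc, hi, hj, and_self, if_true, kerY, bw]
      have hexp : (2:ℝ≥0∞) ^ ((q:ℝ) * (s₁ + s₂)) ≤ (2:ℝ≥0∞) ^ (2 * |s₁|) *
          ((2:ℝ≥0∞) ^ ((i:ℝ) * s₁) * ((2:ℝ≥0∞) ^ (((q - j : ℤ):ℝ) * (s₁ + s₂)) *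
            (2:ℝ≥0∞) ^ ((j:ℝ) * s₂))) := by
        rw [← ENNReal.rpow_add _ _ h20 h2t, ← ENNReal.rpow_add _ _ h20 h2t,
          ← ENNReal.rpow_add _ _ h20 h2t]
        refine ENNReal.rpow_le_rpow_of_exponent_le (by norm_num) ?_
        push_cast
        have hij : |(i:ℝ) - j| ≤ 2 := by exact_mod_cast hc.1
        have h3 : -(((i:ℝ) - j) * s₁) ≤ 2 * |s₁| := by
          refine (neg_le_abs _).trans ?_
          rw [abs_mul]
          gcongr
        linarith
      calc (2:ℝ≥0∞) ^ ((q:ℝ) * (s₁ + s₂)) *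
            (cV b * (eL2 (blockOp φ b i f) * eL2 (blockOp φ b j g)))
          ≤ ((2:ℝ≥0∞) ^ (2 * |s₁|) *
          ((2:ℝ≥0∞) ^ ((i:ℝ) * s₁) * ((2:ℝ≥0∞) ^ (((q - j : ℤ):ℝ) * (s₁ + s₂)) *
            (2:ℝ≥0∞) ^ ((j:ℝ) * s₂)))) *
            (cV b * (eL2 (blockOp φ b i f) * eL2 (blockOp φ b j g))) := by gcongr
        _ = _ := by ring
    · simp only [hc, if_false, mul_zero]
      exact zero_le
  rw [bw]
  calc (2:ℝ≥0∞) ^ ((q:ℝ) * s) * eL2 (blockOp φ b q (remC φ b f g))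
      ≤ (2:ℝ≥0∞) ^ ((q:ℝ) * s) * (ENNReal.ofReal (8 * ∑ i, b i) ^ ((d:ℝ)/2) *
          (2:ℝ≥0∞) ^ ((q:ℝ) * ((d:ℝ)/2)) * Sg) := by gcongr
    _ = ENNReal.ofReal (8 * ∑ i, b i) ^ ((d:ℝ)/2) * ((2:ℝ≥0∞) ^ ((q:ℝ) * (s₁ + s₂)) * Sg) := by
        rw [← hsum, mul_add, ENNReal.rpow_add _ _ h20 h2t]
        ring
    _ ≤ _ := by
        refine (mul_le_mul_right hmain _).trans (le_of_eq ?_)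
        ring

/-- (Remainder high-frequency estimate.) If `s + d/2 = s₁ + s₂` and
`s > -d/2`, then
`‖R(f,g)‖^{h;ζ}_{B^s_{2,r}} ≤ C‖f‖^{h;ζ/64}_{B^{s₁}_{2,1}}‖g‖^{h;ζ/16}_{B^{s₂}_{2,r}}`,
with `C` independent of `f`, `g`, `ζ`. -/
theorem stmt_9
    {d : ℕ} (hd : 2 ≤ d) (b : Fin d → ℝ) (hb : ∀ i, 0 < b i)
    (φ : ℝ → ℝ) (hφ : GoodBump φ)
    (s s₁ s₂ : ℝ) (hsum : s + (d:ℝ)/2 = s₁ + s₂) (hs : -(d:ℝ)/2 < s)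
    (r : ℝ≥0∞) (hr : 1 ≤ r) :
    ∃ C : ℝ≥0∞, C < ⊤ ∧
      ∀ ζ : ℝ, 0 < ζ → ∀ f g : SF d,
        besovN φ b s₁ 1 f < ⊤ → besovN φ b s₂ r g < ⊤ →
        besovH φ b ζ s r (remC φ b f g) ≤
          C * besovH φ b (ζ/64) s₁ 1 f * besovH φ b (ζ/16) s₂ r g := by
  have hσ : 0 < s₁ + s₂ := by
    have : -(d:ℝ)/2 = -((d:ℝ)/2) := by ring
    linarith
  set K := ENNReal.ofReal (8 * ∑ i, b i) ^ ((d:ℝ)/2) * cV b * (2:ℝ≥0∞) ^ (2 * |s₁|) with hK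
  refine ⟨K * ∑' n, kerY (s₁ + s₂) n, ?_, ?_⟩
  · refine ENNReal.mul_lt_top (ENNReal.mul_lt_top (ENNReal.mul_lt_top ?_ ?_) ?_)
      (kerY_sum _ hσ)
    · exact ENNReal.rpow_lt_top_of_nonneg (by positivity) ENNReal.ofReal_ne_top
    · exact enorm_lt_top
    · exact ENNReal.rpow_lt_top_of_nonneg (by positivity) (by norm_num)
  · intro ζ _ f g _ _
    have h1 : besovH φ b ζ s r (remC φ b f g) ≤ lr r (fun q : ℤ =>
        (K * besovH φ b (ζ/64) s₁ 1 f) * ∑' j : ℤ, kerY (s₁ + s₂) (q - j) *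
          (if ζ/16 ≤ (2:ℝ) ^ j then bw φ b s₂ g j else 0)) := by
      refine lr_mono r fun q => ?_
      by_cases hq : ζ ≤ (2:ℝ) ^ q
      · rw [if_pos hq, mul_assoc]
        exact bw_rem_le hφ b hb s s₁ s₂ hsum ζ f g q hq
      · rw [if_neg hq]
        exact zero_le
    refine h1.trans ?_
    rw [lr_const_mul r hr]
    refine (mul_le_mul_right (young_lr r hr (kerY (s₁ + s₂)) _) _).trans (le_of_eq ?_)
    change _ = _ * _ * _ * lr r (fun j : ℤ => if ζ/16 ≤ (2:ℝ) ^ j then bw φ b s₂ g j else 0)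
    ring

end LowMach
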